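/- Let ψ : ℕ → [0, ∞) be monotonically decreasing with ∑_{q=1}^∞ ψ(q) = ∞. Then for Lebesgue-almost every α ∈ [0,1), there exist infinitely many pairs (p,q) ∈ ℤ × ℕ with |α - p/q| ≤ ψ(q)/q. -/

import Mathlib

open MeasureTheory

/-!
The proof combines Gallagher's zero-one law with a second moment estimate.

Put `δ q = ψ q / q`. By `AddCircle.addWellApproximable_ae_empty_or_univ`, the set of points of the
circle lying within `δ q` of a reduced fraction `a / q` for infinitely many `q` is null or conull,
so it is enough to show that its lift to the line is not null, i.e. to bound from below, uniformly
in `M`, the measure of the union `tailUnion ψ M` of the intervals `|x - a / q| < δ q` over reduced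
`a / q ∈ [0, 1)` with `q > M`.

Let `f` be the sum of the indicators of these intervals for `M < q ≤ N`, and `Ψ` the sum of `ψ q`
for `q ≤ N`. The average order of `φ(q) / q` is at least `1 / 4` (`totient_sum_ge`), and since `ψ`
is nonincreasing, summation by parts gives `∫ f ≥ Ψ / 4` for large `N` (`sum_totient_ge`; the terms
`q ≤ M` are absorbed by the divergence). On the other hand `∫ f ^ 2 ≤ 10 * Ψ ^ 2`: distinct reduced
fractions are distinct points, and for fixed denominators `q`, `r` the overlaps of intervals with
distinct centres add up to at most `8 * ψ q * ψ r` (`sum_inter_le`), with no loss of a factor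
`gcd(q, r)`. Hence the support of `f` has measure at least `1 / 160`.
-/

/-! ### Second moment inequality -/

/-- Second moment lower bound for a union: with `f` the sum of the indicators of the `B i`, the
pointwise bound `2 * l * f - l ^ 2 * f ^ 2 ≤ 1` holds on the support of `f`. It replaces the
Cauchy-Schwarz inequality; the optimal `l` is `∫ f / ∫ f ^ 2`. -/
lemma measureReal_biUnion_ge {ι : Type*} (s : Finset ι) (B : ι → Set ℝ)
    (hB : ∀ i, MeasurableSet (B i)) (hfin : ∀ i, volume (B i) ≠ ⊤) (l : ℝ) :
    2 * l * ∑ i ∈ s, volume.real (B i) - l ^ 2 * ∑ i ∈ s, ∑ j ∈ s, volume.real (B i ∩ B j)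
      ≤ volume.real (⋃ i ∈ s, B i) := by
  have hint : ∀ A : Set ℝ, MeasurableSet A → volume A ≠ ⊤ →
      Integrable (A.indicator (1 : ℝ → ℝ)) := fun A hA hA' =>
    (integrable_indicator_iff hA).2 (integrableOn_const hA')
  have hII : ∀ i j, volume (B i ∩ B j) ≠ ⊤ := fun i j =>
    measure_ne_top_of_subset Set.inter_subset_left (hfin i)
  have hU : MeasurableSet (⋃ i ∈ s, B i) := s.measurableSet_biUnion fun i _ => hB i
  have hU' : volume (⋃ i ∈ s, B i) ≠ ⊤ :=
    (measure_biUnion_lt_top s.finite_toSet fun i _ => (hfin i).lt_top).ne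
  have i1 : Integrable (fun x => ∑ i ∈ s, (B i).indicator (1 : ℝ → ℝ) x) :=
    integrable_finsetSum _ fun i _ => hint _ (hB i) (hfin i)
  have i2 : ∀ i, Integrable (fun x => ∑ j ∈ s, (B i ∩ B j).indicator (1 : ℝ → ℝ) x) :=
    fun i => integrable_finsetSum _ fun j _ => hint _ ((hB i).inter (hB j)) (hII i j)
  have i3 : Integrable (fun x => ∑ i ∈ s, ∑ j ∈ s, (B i ∩ B j).indicator (1 : ℝ → ℝ) x) :=
    integrable_finsetSum _ fun i _ => i2 i
  have key : ∫ x, (2 * l * ∑ i ∈ s, (B i).indicator (1 : ℝ → ℝ) x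
      - l ^ 2 * ∑ i ∈ s, ∑ j ∈ s, (B i ∩ B j).indicator (1 : ℝ → ℝ) x) =
      2 * l * ∑ i ∈ s, volume.real (B i) - l ^ 2 * ∑ i ∈ s, ∑ j ∈ s, volume.real (B i ∩ B j) := by
    rw [integral_sub (i1.const_mul _) (i3.const_mul _), integral_const_mul, integral_const_mul,
      integral_finsetSum _ fun i _ => hint _ (hB i) (hfin i), integral_finsetSum _ fun i _ => i2 i]
    congr 2
    · exact Finset.sum_congr rfl fun i _ => integral_indicator_one (hB i)
    · refine Finset.sum_congr rfl fun i _ => ?_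
      rw [integral_finsetSum _ fun j _ => hint _ ((hB i).inter (hB j)) (hII i j)]
      exact Finset.sum_congr rfl fun j _ => integral_indicator_one ((hB i).inter (hB j))
  rw [← key, ← integral_indicator_one hU]
  refine integral_mono ((i1.const_mul _).sub (i3.const_mul _)) (hint _ hU hU') fun x => ?_
  have hsq : ∑ i ∈ s, ∑ j ∈ s, (B i ∩ B j).indicator (1 : ℝ → ℝ) x
      = (∑ i ∈ s, (B i).indicator (1 : ℝ → ℝ) x) ^ 2 := by
    rw [sq, Finset.sum_mul_sum]
    refine Finset.sum_congr rfl fun i _ => Finset.sum_congr rfl fun j _ => ?_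
    rw [Set.inter_indicator_one]; rfl
  simp only [hsq]
  by_cases hx : x ∈ ⋃ i ∈ s, B i
  · rw [Set.indicator_of_mem hx, Pi.one_apply]
    nlinarith [sq_nonneg (1 - l * ∑ i ∈ s, (B i).indicator (1 : ℝ → ℝ) x)]
  · rw [Set.indicator_of_notMem hx]
    have : ∑ i ∈ s, (B i).indicator (1 : ℝ → ℝ) x = 0 :=
      Finset.sum_eq_zero fun i hi => Set.indicator_of_notMem
        (fun h => hx (Set.mem_biUnion hi h)) _
    simp [this]

/-! ### Overlaps of intervals around fractions -/

/-- Counts pairs of numerators whose cross difference `a * r - b * q` is nonzero and small. With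
`d = gcd(q, r)`, this difference is one of at most `2 * D / d` nonzero multiples of `d`, and each
value is taken at most `d` times, so that the gcd cancels. -/
lemma card_pairs_le (q r : ℕ) (hq : 0 < q) (hr : 0 < r) (D : ℝ) (hD : 0 ≤ D) :
    ((((Finset.range q) ×ˢ (Finset.range r)).filter fun ab : ℕ × ℕ =>
      (ab.1 : ℤ) * r - ab.2 * q ≠ 0 ∧ |(((ab.1 : ℤ) * r - ab.2 * q : ℤ) : ℝ)| < D).card : ℝ)
      ≤ 2 * D := by
  obtain ⟨d, q', r', hd, hcop, rfl, rfl⟩ := Nat.exists_coprime' (m := q) (n := r)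
    (Nat.gcd_pos_of_pos_left _ hq)
  have hq' : 0 < q' := Nat.pos_of_mul_pos_right hq
  have hr' : 0 < r' := Nat.pos_of_mul_pos_right hr
  have hdR : (0 : ℝ) < d := by exact_mod_cast hd
  set K : ℕ := ⌊D / d⌋₊
  have hcard : ((((Finset.Icc (-(K : ℤ)) K).erase 0) ×ˢ Finset.range d).card : ℝ) ≤ 2 * D := by
    rw [Finset.card_product, Finset.card_erase_of_mem (by simp), Int.card_Icc, Finset.card_range]
    have h1 : ((K : ℤ) + 1 - -(K : ℤ)).toNat - 1 = 2 * K := by omega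
    rw [h1]
    have h2 : (K : ℝ) ≤ D / d := Nat.floor_le (by positivity)
    rw [le_div_iff₀ hdR] at h2
    push_cast
    linarith
  refine le_trans ?_ hcard
  rw [Nat.cast_le]
  have hfac : ∀ a b : ℕ, (a : ℤ) * ((r' * d : ℕ) : ℤ) - b * ((q' * d : ℕ) : ℤ)
      = (a * r' - b * q') * d := fun a b => by push_cast; ring
  -- The value `k = a * r' - b * q'` fixes `a` modulo `q'`, hence `(k, a / q')` fixes `a` and `b`.
  refine Finset.card_le_card_of_injOn
    (fun ab => ((ab.1 : ℤ) * r' - ab.2 * q', ab.1 / q')) ?_ ?_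
  · rintro ⟨a, b⟩ h
    simp only [Finset.coe_filter, Finset.mem_product, Finset.mem_range, Set.mem_ofPred_eq,
      hfac] at h
    obtain ⟨⟨ha, hb⟩, hne, hlt⟩ := h
    have hk : ((a : ℤ) * r' - b * q') ≠ 0 := fun h0 => hne (by rw [h0, zero_mul])
    have habs : (((a : ℤ) * r' - b * q').natAbs : ℝ) ≤ D / d := by
      rw [le_div_iff₀ hdR, Nat.cast_natAbs, Int.cast_abs]
      rw [Int.cast_mul, abs_mul, Int.cast_natCast, abs_of_pos hdR] at hlt
      exact hlt.le
    have hK := Nat.le_floor habs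
    simp only [Finset.coe_product, Set.mem_prod, Finset.coe_erase, Finset.coe_Icc,
      Finset.coe_range, Set.mem_sdiff, Set.mem_Icc, Set.mem_singleton_iff, Set.mem_Iio]
    refine ⟨⟨by omega, hk⟩, ?_⟩
    exact Nat.div_lt_of_lt_mul ha
  · rintro ⟨a, b⟩ - ⟨a', b'⟩ - h
    simp only [Prod.mk.injEq] at h
    obtain ⟨h1, h2⟩ := h
    have h3 : (q' : ℤ) ∣ (a' - a) := by
      refine IsCoprime.dvd_of_dvd_mul_right (Nat.isCoprime_iff_coprime.2 hcop) ⟨b' - b, ?_⟩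
      linarith
    have h4 : a % q' = a' % q' := (Nat.modEq_iff_dvd.2 h3)
    have ha : a = a' := by
      rw [← Nat.div_add_mod a q', ← Nat.div_add_mod a' q', h2, h4]
    subst ha
    have : (b : ℤ) * q' = b' * q' := by linarith
    have : (b : ℤ) = b' := mul_right_cancel₀ (by exact_mod_cast hq'.ne') this
    rw [Prod.mk.injEq]; exact ⟨rfl, by exact_mod_cast this⟩

/-- The intervals of radius `x / q` about the fractions `a / q` and those of radius `y / r` about
the `b / r` are quasi-independent once pairs with a common centre are discarded. -/
lemma sum_inter_le (q r : ℕ) (hq : 0 < q) (hr : 0 < r) (x y : ℝ) (hx : 0 ≤ x) (hy : 0 ≤ y) :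
    ∑ a ∈ Finset.range q, ∑ b ∈ Finset.range r, (if (a : ℝ) / q = b / r then 0 else
      volume.real (Metric.ball ((a : ℝ) / q) (x / q) ∩ Metric.ball ((b : ℝ) / r) (y / r)))
      ≤ 8 * (x * y) := by
  have hqR : (0 : ℝ) < q := by exact_mod_cast hq
  have hrR : (0 : ℝ) < r := by exact_mod_cast hr
  have hxq : 0 ≤ x / q := by positivity
  have hyr : 0 ≤ y / r := by positivity
  set D : ℝ := (x / q + y / r) * (q * r) with hD
  set m : ℝ := 2 * min (x / q) (y / r) with hm
  have hm0 : 0 ≤ m := by positivity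
  have hdiff : ∀ a b : ℕ, (((a : ℤ) * r - b * q : ℤ) : ℝ) = ((a : ℝ) / q - b / r) * (q * r) := by
    intro a b; push_cast; field_simp
  rw [← Finset.sum_product']
  calc _ ≤ ∑ ab ∈ (Finset.range q) ×ˢ (Finset.range r),
        (if (ab.1 : ℤ) * r - ab.2 * q ≠ 0 ∧ |(((ab.1 : ℤ) * r - ab.2 * q : ℤ) : ℝ)| < D
          then m else 0) := by
        refine Finset.sum_le_sum fun ab _ => ?_
        obtain ⟨a, b⟩ := ab
        dsimp only
        split_ifs with h1 h2 h2
        · exact hm0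
        · exact le_rfl
        · rw [hm]
          rcases le_total (x / q) (y / r) with h | h
          · rw [min_eq_left h, ← Real.volume_real_ball (a := (a : ℝ) / q) hxq]
            exact measureReal_mono Set.inter_subset_left measure_ball_lt_top.ne
          · rw [min_eq_right h, ← Real.volume_real_ball (a := (b : ℝ) / r) hyr]
            exact measureReal_mono Set.inter_subset_right measure_ball_lt_top.ne
        · have hne : (a : ℤ) * r - b * q ≠ 0 := by
            intro h0
            apply h1
            have := hdiff a b
            rw [h0, Int.cast_zero, eq_comm, mul_eq_zero] at this
            rcases this with h | h
            · linarith
            · exact absurd h (by positivity)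
          have hge : D ≤ |(((a : ℤ) * r - b * q : ℤ) : ℝ)| := by
            by_contra hlt
            exact h2 ⟨hne, not_le.1 hlt⟩
          rw [hdiff, abs_mul, abs_of_pos (mul_pos hqR hrR), hD,
            mul_le_mul_iff_of_pos_right (mul_pos hqR hrR)] at hge
          rw [Set.disjoint_iff_inter_eq_empty.1 (Metric.ball_disjoint_ball
            (by rwa [Real.dist_eq]))]
          simp
    _ ≤ m * (2 * D) := by
        rw [← Finset.sum_filter, Finset.sum_const, nsmul_eq_mul, mul_comm]
        exact mul_le_mul_of_nonneg_left (card_pairs_le q r hq hr D (by positivity)) hm0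
    _ ≤ 8 * (x * y) := by
        have e : x * y = (x / q) * (y / r) * (q * r) := by field_simp
        rw [e, hm, hD]
        have : min (x / q) (y / r) * (x / q + y / r) ≤ 2 * ((x / q) * (y / r)) := by
          rcases le_total (x / q) (y / r) with h | h
          · rw [min_eq_left h]; nlinarith
          · rw [min_eq_right h]; nlinarith
        have := mul_le_mul_of_nonneg_right this (mul_pos hqR hrR).le
        nlinarith

/-! ### Average order of `φ(q) / q` -/

lemma one_sub_sum_le_prod {ι : Type*} (s : Finset ι) (f : ι → ℝ) (h0 : ∀ i ∈ s, 0 ≤ f i)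
    (h1 : ∀ i ∈ s, f i ≤ 1) : 1 - ∑ i ∈ s, f i ≤ ∏ i ∈ s, (1 - f i) := by
  classical
  induction s using Finset.induction_on with
  | empty => simp
  | insert a s ha ih =>
    rw [Finset.sum_insert ha, Finset.prod_insert ha]
    have ih := ih (fun i hi => h0 i (Finset.mem_insert_of_mem hi))
      (fun i hi => h1 i (Finset.mem_insert_of_mem hi))
    have ha0 := h0 a (Finset.mem_insert_self _ _)
    have ha1 := h1 a (Finset.mem_insert_self _ _)
    have hs : 0 ≤ ∑ i ∈ s, f i :=
      Finset.sum_nonneg fun i hi => h0 i (Finset.mem_insert_of_mem hi)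
    nlinarith

lemma sum_inv_sq_le (N : ℕ) : ∑ p ∈ Finset.Icc 2 N, ((p : ℝ) ^ 2)⁻¹ ≤ 3 / 4 := by
  -- The stronger bound `3 / 4 - 1 / N` telescopes.
  have h : ∀ n : ℕ, ∑ p ∈ Finset.Icc 2 (n + 2), ((p : ℝ) ^ 2)⁻¹ ≤ 3 / 4 - 1 / (n + 2) := by
    intro n
    induction n with
    | zero => norm_num
    | succ n ih =>
      rw [show n + 1 + 2 = (n + 2) + 1 by ring, Finset.sum_Icc_succ_top (by omega)]
      have : (((n + 2 + 1 : ℕ) : ℝ) ^ 2)⁻¹ ≤ 1 / (n + 2) - 1 / ((n + 1 : ℕ) + 2) := by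
        rw [div_sub_div _ _ (by positivity) (by positivity), inv_eq_one_div,
          div_le_div_iff₀ (by positivity) (by positivity)]
        push_cast
        nlinarith [(n.cast_nonneg : (0 : ℝ) ≤ n)]
      linarith
  rcases lt_or_ge N 2 with hN | hN
  · rw [Finset.Icc_eq_empty (by omega)]; norm_num
  · obtain ⟨n, rfl⟩ := Nat.exists_eq_add_of_le' hN
    have : (0 : ℝ) ≤ 1 / (n + 2) := by positivity
    linarith [h n]

/-- Averaging `φ(q) / q ≥ 1 - ∑ 1 / p` over `q ≤ N`, where `p` runs over the prime divisors of `q`,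
gives `N * (1 - ∑ 1 / p ^ 2)`. The sum over `p` may even be extended to all integers `p ≥ 2`. -/
lemma totient_sum_ge (N : ℕ) :
    (N : ℝ) / 4 ≤ ∑ q ∈ Finset.Ioc 0 N, (q.totient : ℝ) / q := by
  have h1 : ∀ q ∈ Finset.Ioc 0 N,
      1 - ∑ p ∈ Finset.Icc 2 N, (if p ∣ q then (p : ℝ)⁻¹ else 0) ≤ (q.totient : ℝ) / q := by
    intro q hq
    rw [Finset.mem_Ioc] at hq
    have hq0 : (q : ℝ) ≠ 0 := by exact_mod_cast hq.1.ne'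
    have e : (q.totient : ℝ) / q = ∏ p ∈ q.primeFactors, (1 - (p : ℝ)⁻¹) := by
      rw [div_eq_iff hq0, mul_comm]
      have := congrArg (Rat.cast : ℚ → ℝ) (Nat.totient_eq_mul_prod_factors q)
      push_cast at this
      exact this
    rw [e]
    refine le_trans ?_ (one_sub_sum_le_prod _ _ (fun p _ => by positivity) fun p hp =>
      inv_le_one_of_one_le₀ (by exact_mod_cast (Nat.prime_of_mem_primeFactors hp).one_le))
    rw [← Finset.sum_filter]
    refine sub_le_sub_left (Finset.sum_le_sum_of_subset_of_nonneg ?_ fun _ _ _ => by positivity) _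
    intro p hp
    have hpr := Nat.prime_of_mem_primeFactors hp
    have hdv := Nat.dvd_of_mem_primeFactors hp
    rw [Finset.mem_filter, Finset.mem_Icc]
    exact ⟨⟨hpr.two_le, (Nat.le_of_dvd hq.1 hdv).trans hq.2⟩, hdv⟩
  refine le_trans ?_ (Finset.sum_le_sum h1)
  rw [Finset.sum_sub_distrib, Finset.sum_comm, Finset.sum_const, Nat.card_Ioc, nsmul_one,
    Nat.sub_zero]
  have h2 : ∀ p ∈ Finset.Icc 2 N, ∑ q ∈ Finset.Ioc 0 N, (if p ∣ q then (p : ℝ)⁻¹ else 0)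
      ≤ N * ((p : ℝ) ^ 2)⁻¹ := by
    intro p hp
    rw [← Finset.sum_filter, Finset.sum_const, Nat.Ioc_filter_dvd_card_eq_div, nsmul_eq_mul]
    have : ((N / p : ℕ) : ℝ) ≤ N / p := Nat.cast_div_le
    calc ((N / p : ℕ) : ℝ) * (p : ℝ)⁻¹ ≤ N / p * (p : ℝ)⁻¹ := by gcongr
      _ = _ := by rw [sq, mul_inv]; ring
  have h3 := Finset.sum_le_sum h2
  rw [← Finset.mul_sum] at h3
  have h4 := mul_le_mul_of_nonneg_left (sum_inv_sq_le N) (N.cast_nonneg : (0 : ℝ) ≤ N)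
  linarith

/-- Summation by parts: nonnegative partial sums stay nonnegative under weights `ψ` that are
nonnegative and nonincreasing. -/
lemma sum_mul_nonneg_of_antitone (ψ h : ℕ → ℝ) (hψ : ∀ q, 0 ≤ ψ q) (hmono : Antitone ψ)
    (hh : ∀ n, 0 ≤ ∑ q ∈ Finset.Ioc 0 n, h q) (n : ℕ) :
    0 ≤ ∑ q ∈ Finset.Ioc 0 n, ψ q * h q := by
  have key : ψ n * ∑ q ∈ Finset.Ioc 0 n, h q ≤ ∑ q ∈ Finset.Ioc 0 n, ψ q * h q := by
    induction n with
    | zero => simp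
    | succ n ih =>
      rw [Finset.sum_Ioc_succ_top (Nat.zero_le n), Finset.sum_Ioc_succ_top (Nat.zero_le n), mul_add]
      have := mul_le_mul_of_nonneg_right (hmono n.le_succ) (hh n)
      simp only [Nat.succ_eq_add_one] at this
      linarith
  exact (mul_nonneg (hψ n) (hh n)).trans key

lemma sum_totient_ge (ψ : ℕ → ℝ) (hψ : ∀ q, 0 ≤ ψ q) (hmono : Antitone ψ) (n : ℕ) :
    (∑ q ∈ Finset.Ioc 0 n, ψ q) / 4 ≤ ∑ q ∈ Finset.Ioc 0 n, q.totient * (ψ q / q) := by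
  have := sum_mul_nonneg_of_antitone ψ (fun q => (q.totient : ℝ) / q - 1 / 4) hψ hmono
    (fun n => by
      have := totient_sum_ge n
      rw [Finset.sum_sub_distrib, Finset.sum_const, Nat.card_Ioc, nsmul_eq_mul]
      push_cast [Nat.sub_zero]
      linarith) n
  have e : ∑ q ∈ Finset.Ioc 0 n, ψ q * ((q.totient : ℝ) / q - 1 / 4)
    = ∑ q ∈ Finset.Ioc 0 n, q.totient * (ψ q / q) - (∑ q ∈ Finset.Ioc 0 n, ψ q) / 4 := by
    rw [Finset.sum_div, ← Finset.sum_sub_distrib]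
    exact Finset.sum_congr rfl fun q _ => by ring
  linarith

/-! ### The limsup set -/

lemma ae_real_of_ae_circle {P : UnitAddCircle → Prop} (h : ∀ᵐ y, P y) :
    ∀ᵐ x : ℝ, P (x : UnitAddCircle) := by
  rw [← Measure.restrict_univ (μ := (volume : Measure ℝ)), ← iUnion_Ioc_intCast (α := ℝ),
    ae_restrict_iUnion_iff]
  intro n
  exact (UnitAddCircle.measurePreserving_mk (n : ℝ)).quasiMeasurePreserving.ae h

/-- The union of the open intervals of radius `ψ q / q` about the reduced fractions `a / q` in
`[0, 1)` with denominator `q > M`, as a subset of the line (not reduced modulo 1). -/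
def tailUnion (ψ : ℕ → ℝ) (M : ℕ) : Set ℝ :=
  ⋃ q > M, ⋃ a < q, ⋃ (_ : q.Coprime a), Metric.ball ((a : ℝ) / q) (ψ q / q)

lemma mem_tailUnion {ψ : ℕ → ℝ} {M : ℕ} {x : ℝ} : x ∈ tailUnion ψ M ↔
    ∃ q > M, ∃ a < q, q.Coprime a ∧ |x - (a : ℝ) / q| < ψ q / q := by
  simp only [tailUnion, Set.mem_iUnion, exists_prop, Metric.mem_ball, Real.dist_eq]

lemma isOpen_tailUnion (ψ : ℕ → ℝ) (M : ℕ) : IsOpen (tailUnion ψ M) := by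
  unfold tailUnion
  exact isOpen_biUnion fun _ _ => isOpen_biUnion fun _ _ => isOpen_iUnion fun _ => Metric.isOpen_ball

lemma volume_tailUnion_ne_top {ψ : ℕ → ℝ} (hψ : ∀ q, 0 ≤ ψ q) (hmono : Antitone ψ) (M : ℕ) :
    volume (tailUnion ψ M) ≠ ⊤ := by
  have hball : volume (Metric.ball (0 : ℝ) (1 + ψ 0)) ≠ ⊤ := measure_ball_lt_top.ne
  refine measure_ne_top_of_subset (fun x hx => ?_) hball
  obtain ⟨q, hq, a, ha, -, h⟩ := mem_tailUnion.1 hx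
  rw [Metric.mem_ball, Real.dist_eq, sub_zero]
  have hq1 : (1 : ℝ) ≤ q := by exact_mod_cast (Nat.succ_le_of_lt (Nat.zero_lt_of_lt hq))
  have h1 : ψ q / q ≤ ψ 0 := (div_le_self (hψ q) hq1).trans (hmono q.zero_le)
  have h2 : (a : ℝ) / q ≤ 1 := div_le_one_of_le₀ (by exact_mod_cast ha.le) (by positivity)
  have h3 : (0 : ℝ) ≤ (a : ℝ) / q := by positivity
  rw [abs_lt] at h ⊢
  constructor <;> linarith

/-- The uniform lower bound: the second moment inequality for the intervals with `M < q ≤ N`,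
where `N` is so large that the terms with `q ≤ M` are negligible. -/
lemma volume_tailUnion_ge {ψ : ℕ → ℝ} (hψ : ∀ q, 0 ≤ ψ q) (hmono : Antitone ψ)
    (hdiv : ¬ Summable ψ) (M : ℕ) : 1 / 160 ≤ volume.real (tailUnion ψ M) := by
  set C : ℝ := ∑ q ∈ Finset.Ioc 0 M, (q.totient : ℝ) * (ψ q / q) with hC
  obtain ⟨N, hMN, hN⟩ : ∃ N ≥ M, max 1 (8 * C) ≤ ∑ q ∈ Finset.Ioc 0 N, ψ q := by
    have h := (not_summable_iff_tendsto_nat_atTop_of_nonneg hψ).1 hdiv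
    obtain ⟨N, hN, hM⟩ := ((h.eventually_ge_atTop (ψ 0 + max 1 (8 * C))).and
      (Filter.eventually_ge_atTop (M + 1))).exists
    obtain ⟨n, rfl⟩ := Nat.exists_eq_add_of_le' (Nat.one_le_of_lt hM)
    refine ⟨n, by omega, ?_⟩
    rw [Finset.range_eq_Ico, Finset.sum_eq_sum_Ico_succ_bot (by omega)] at hN
    have : Finset.Ico (0 + 1) (n + 1) = Finset.Ioc 0 n := by ext; simp; omega
    rw [this] at hN
    linarith
  set Ψ : ℝ := ∑ q ∈ Finset.Ioc 0 N, ψ q with hΨ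
  have hΨ1 : 1 ≤ Ψ := (le_max_left _ _).trans hN
  have hΨC : 8 * C ≤ Ψ := (le_max_right _ _).trans hN
  have hpos : ∀ q ∈ Finset.Ioc M N, 0 < q := fun q hq =>
    Nat.zero_lt_of_lt (Finset.mem_Ioc.1 hq).1
  have hΨM : ∑ q ∈ Finset.Ioc M N, ψ q ≤ Ψ :=
    Finset.sum_le_sum_of_subset_of_nonneg (Finset.Ioc_subset_Ioc_left M.zero_le) fun q _ _ => hψ q
  let s : Finset (Σ _ : ℕ, ℕ) :=
    (Finset.Ioc M N).sigma fun q => (Finset.range q).filter (q.Coprime ·)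
  let B : (Σ _ : ℕ, ℕ) → Set ℝ := fun x => Metric.ball ((x.2 : ℝ) / x.1) (ψ x.1 / x.1)
  have hvol : ∀ x, volume.real (B x) = 2 * (ψ x.1 / x.1) := fun x =>
    Real.volume_real_ball (div_nonneg (hψ _) (Nat.cast_nonneg _))
  have hS : ∑ x ∈ s, volume.real (B x) =
      2 * ∑ q ∈ Finset.Ioc M N, (q.totient : ℝ) * (ψ q / q) := by
    rw [Finset.sum_sigma, Finset.mul_sum]
    refine Finset.sum_congr rfl fun q _ => ?_
    simp only [hvol, Finset.sum_const, nsmul_eq_mul]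
    rw [← Nat.totient_eq_card_coprime]
    ring
  have hSge : Ψ / 4 ≤ ∑ x ∈ s, volume.real (B x) := by
    have h1 := sum_totient_ge ψ hψ hmono N
    rw [← Finset.sum_Ioc_consecutive (fun q : ℕ => (q.totient : ℝ) * (ψ q / q))
      M.zero_le hMN] at h1
    rw [hS]
    linarith
  have hSle : ∑ x ∈ s, volume.real (B x) ≤ 2 * Ψ := by
    rw [hS]
    refine mul_le_mul_of_nonneg_left (le_trans (Finset.sum_le_sum fun q hq => ?_) hΨM) zero_le_two
    have hq0 : (0 : ℝ) < q := by exact_mod_cast hpos q hq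
    calc (q.totient : ℝ) * (ψ q / q) ≤ q * (ψ q / q) := by
          gcongr
          · exact div_nonneg (hψ q) hq0.le
          · exact Nat.totient_le q
      _ = ψ q := by field_simp
  have hinter : ∑ x ∈ s, ∑ y ∈ s, volume.real (B x ∩ B y) ≤ 10 * Ψ ^ 2 := by
    -- Reduced fractions with a common centre are equal, so such pairs are diagonal.
    have h1 : ∀ x ∈ s, ∀ y ∈ s, volume.real (B x ∩ B y) ≤ (if x = y then volume.real (B x) else 0)
        + (if (x.2 : ℝ) / x.1 = y.2 / y.1 then 0 else volume.real (B x ∩ B y)) := by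
      rintro ⟨q, a⟩ hx ⟨r, b⟩ hy
      by_cases hxy : (⟨q, a⟩ : Σ _ : ℕ, ℕ) = ⟨r, b⟩
      · rw [hxy]; simp
      · have hne : (a : ℝ) / q ≠ b / r := by
          intro he
          apply hxy
          simp only [s, Finset.mem_sigma, Finset.mem_filter, Finset.mem_range] at hx hy
          have hq := hpos q hx.1
          have hr := hpos r hy.1
          have hq0 : (q : ℝ) ≠ 0 := by exact_mod_cast hq.ne'
          have hr0 : (r : ℝ) ≠ 0 := by exact_mod_cast hr.ne'
          rw [div_eq_div_iff hq0 hr0] at he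
          have he' : a * r = b * q := by exact_mod_cast he
          have hqr : q = r := Nat.dvd_antisymm
            (hx.2.2.dvd_of_dvd_mul_left ⟨b, by rw [he', mul_comm]⟩)
            (hy.2.2.dvd_of_dvd_mul_left ⟨a, by rw [← he', mul_comm]⟩)
          subst hqr
          rw [Nat.eq_of_mul_eq_mul_right hq he']
        simp [hxy, hne]
    have h2 := Finset.sum_le_sum fun x hx => Finset.sum_le_sum (h1 x hx)
    have h3 : ∑ x ∈ s, ∑ y ∈ s, (if x = y then volume.real (B x) else 0)
        = ∑ x ∈ s, volume.real (B x) :=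
      Finset.sum_congr rfl fun x hx => by rw [Finset.sum_ite_eq, if_pos hx]
    have h4 : ∑ x ∈ s, ∑ y ∈ s, (if (x.2 : ℝ) / x.1 = y.2 / y.1 then 0
        else volume.real (B x ∩ B y)) ≤ 8 * Ψ ^ 2 := by
      simp only [s, Finset.sum_sigma]
      calc _ ≤ ∑ q ∈ Finset.Ioc M N, ∑ r ∈ Finset.Ioc M N, 8 * (ψ q * ψ r) := by
            refine Finset.sum_le_sum fun q hq => ?_
            rw [Finset.sum_comm]
            refine Finset.sum_le_sum fun r hr => ?_
            refine le_trans ?_ (sum_inter_le q r (hpos q hq) (hpos r hr) _ _ (hψ q) (hψ r))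
            have h0 : ∀ a b : ℕ, 0 ≤ (if (a : ℝ) / q = b / r then 0 else
                volume.real (Metric.ball ((a : ℝ) / q) (ψ q / q) ∩
                  Metric.ball ((b : ℝ) / r) (ψ r / r))) := fun a b => by
              split_ifs
              exacts [le_rfl, measureReal_nonneg]
            refine (Finset.sum_le_sum fun a _ => ?_).trans
              (Finset.sum_le_sum_of_subset_of_nonneg (Finset.filter_subset _ _)
                fun a _ _ => Finset.sum_nonneg fun b _ => h0 a b)
            exact Finset.sum_le_sum_of_subset_of_nonneg (Finset.filter_subset _ _)
              fun b _ _ => h0 a b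
        _ = 8 * (∑ q ∈ Finset.Ioc M N, ψ q) ^ 2 := by
            rw [sq, Finset.sum_mul_sum]
            simp only [Finset.mul_sum]
        _ ≤ 8 * Ψ ^ 2 := by
            have := Finset.sum_nonneg fun q (_ : q ∈ Finset.Ioc M N) => hψ q
            gcongr
    simp only [Finset.sum_add_distrib] at h2
    nlinarith
  -- The choice `l = 1 / (40 * Ψ)` maximises `2 * l * (Ψ / 4) - l ^ 2 * (10 * Ψ ^ 2)`.
  have hmom := measureReal_biUnion_ge s B (fun _ => measurableSet_ball)
    (fun _ => measure_ball_lt_top.ne) (1 / (40 * Ψ))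
  have hsub : volume.real (⋃ x ∈ s, B x) ≤ volume.real (tailUnion ψ M) := by
    refine measureReal_mono ?_ (volume_tailUnion_ne_top hψ hmono M)
    refine Set.iUnion₂_subset fun x hx y hy => ?_
    simp only [s, Finset.mem_sigma, Finset.mem_filter, Finset.mem_range, Finset.mem_Ioc] at hx
    rw [mem_tailUnion]
    exact ⟨x.1, hx.1.1, x.2, hx.2.1, hx.2.2, by rw [← Real.dist_eq]; exact hy⟩
  have hΨ0 : Ψ ≠ 0 := by positivity
  have e1 : 2 * (1 / (40 * Ψ)) * (Ψ / 4) = 1 / 80 := by field_simp; norm_num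
  have e2 : (1 / (40 * Ψ)) ^ 2 * (10 * Ψ ^ 2) = 1 / 160 := by field_simp; norm_num
  have b1 : 2 * (1 / (40 * Ψ)) * (Ψ / 4) ≤ 2 * (1 / (40 * Ψ)) * ∑ x ∈ s, volume.real (B x) := by
    gcongr
  have b2 : (1 / (40 * Ψ)) ^ 2 * ∑ x ∈ s, ∑ y ∈ s, volume.real (B x ∩ B y)
      ≤ (1 / (40 * Ψ)) ^ 2 * (10 * Ψ ^ 2) := by gcongr
  linarith

lemma volume_iInter_tailUnion_ne_zero {ψ : ℕ → ℝ} (hψ : ∀ q, 0 ≤ ψ q) (hmono : Antitone ψ)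
    (hdiv : ¬ Summable ψ) : volume (⋂ M, tailUnion ψ M) ≠ 0 := by
  have hanti : Antitone (tailUnion ψ) := fun M M' h x hx => by
    rw [mem_tailUnion] at hx ⊢
    obtain ⟨q, hq, hx⟩ := hx
    exact ⟨q, lt_of_le_of_lt h hq, hx⟩
  have ht := tendsto_measure_iInter_atTop (μ := volume)
    (fun M => (isOpen_tailUnion ψ M).measurableSet.nullMeasurableSet) hanti
    ⟨0, volume_tailUnion_ne_top hψ hmono 0⟩
  have hge : ENNReal.ofReal (1 / 160) ≤ volume (⋂ M, tailUnion ψ M) :=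
    ge_of_tendsto' ht fun M => ENNReal.ofReal_le_of_le_toReal (volume_tailUnion_ge hψ hmono hdiv M)
  exact (lt_of_lt_of_le (ENNReal.ofReal_pos.2 (by norm_num)) hge).ne'

theorem khintchine_divergence (ψ : ℕ → ℝ) (hψ : ∀ q, 0 ≤ ψ q)
    (hmono : Antitone ψ) (hdiv : ¬ Summable ψ) :
    volume {α ∈ Set.Ico (0 : ℝ) 1 |
      ¬ {pq : ℤ × ℕ | 0 < pq.2 ∧ |α - (pq.1 : ℝ) / pq.2| ≤ ψ pq.2 / pq.2}.Infinite} = 0 := by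
  set δ : ℕ → ℝ := fun n => ψ n / n with hδ
  have hδ0 : Filter.Tendsto δ Filter.atTop (nhds 0) :=
    squeeze_zero (fun n => div_nonneg (hψ n) n.cast_nonneg)
      (fun n => div_le_div_of_nonneg_right (hmono n.zero_le) n.cast_nonneg)
      (tendsto_const_div_atTop_nhds_zero_nat (ψ 0))
  have hae : ∀ᵐ x : UnitAddCircle, x ∈ addWellApproximable UnitAddCircle δ := by
    refine (AddCircle.addWellApproximable_ae_empty_or_univ δ hδ0).resolve_left fun hnot => ?_
    refine volume_iInter_tailUnion_ne_zero hψ hmono hdiv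
      (measure_mono_null (fun x hx => ?_) (ae_iff.1 (ae_real_of_ae_circle hnot)))
    rw [Set.mem_ofPred_eq, not_not, UnitAddCircle.mem_addWellApproximable_iff]
    refine Set.infinite_of_forall_exists_gt fun M => ?_
    obtain ⟨q, hq, a, ha, hco, h⟩ := mem_tailUnion.1 (Set.mem_iInter.1 hx M)
    refine ⟨q, ⟨a, ha, hco.symm, lt_of_le_of_lt ?_ h⟩, hq⟩
    rw [← AddCircle.coe_sub, UnitAddCircle.norm_eq]
    simpa using round_le (x - (a : ℝ) / q) 0
  refine measure_mono_null (fun x hx => ?_) (ae_iff.1 (ae_real_of_ae_circle hae))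
  refine fun hwell => hx.2 (Set.Infinite.of_image Prod.snd ?_)
  rw [UnitAddCircle.mem_addWellApproximable_iff] at hwell
  refine hwell.mono ?_
  rintro n ⟨m, hmn, -, h⟩
  have hn : (n : ℝ) ≠ 0 := by exact_mod_cast (Nat.zero_lt_of_lt hmn).ne'
  rw [← AddCircle.coe_sub, UnitAddCircle.norm_eq] at h
  -- Distance on the circle is distance to the nearest integer, which shifts the numerator.
  refine ⟨(m + n * round (x - (m : ℝ) / n), n), ⟨Nat.zero_lt_of_lt hmn, ?_⟩, rfl⟩
  refine le_trans (le_of_eq ?_) h.le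
  congr 1
  push_cast
  field_simp
  ring
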